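/- arXiv:2506.01681 — 5 statements merged into one kernel-verified Lean document; each statement's English description precedes it below -/
import Mathlib

section
/- (Non-Euclidean second prox theorem) Let ψ : E → (−∞, ∞] be a proper closed convex function differentiable over dom(∂ψ), let φ : E → (−∞, ∞] be a proper closed convex function with dom(∂φ) ⊆ dom(∂ψ), and assume ψ + I_{dom(φ)} is σ-strongly convex (I_A denotes the indicator function of A). Let b ∈ dom(∂ψ) and let a = argmin_{x ∈ E} { φ(x) + V_ψ(x, b) }. Then for every u ∈ dom(φ): ⟨∇ψ(b) − ∇ψ(a), u − a⟩ ≤ φ(u) − φ(a). -/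
/-- The subdifferential of an extended-real-valued function `ψ : E → (-∞, ∞]`
(modelled as `E → EReal`): `g ∈ ∂ψ(x)` iff `ψ x + ⟨g, y - x⟩ ≤ ψ y` for all `y`. -/
def ERealSubdiff {E : Type*} [NormedAddCommGroup E] [NormedSpace ℝ E]
    (ψ : E → EReal) (x : E) : Set (E →L[ℝ] ℝ) :=
  {g | ∀ y : E, ψ x + ((g (y - x) : ℝ) : EReal) ≤ ψ y}

open Set Filter Topology

/-- If an affine function of `t` is nonnegative on `(0, 1]`, it is nonnegative at `0`. -/
lemma nonneg_of_forall_combo_nonneg {α β : ℝ}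
    (h : ∀ t : ℝ, 0 < t → t ≤ 1 → 0 ≤ (1 - t) * α + t * β) : 0 ≤ α := by
  have hcont : Continuous fun t : ℝ => (1 - t) * α + t * β := by fun_prop
  have hlim : Tendsto (fun t : ℝ => (1 - t) * α + t * β) (𝓝[>] 0) (𝓝 α) := by
    simpa using (hcont.tendsto 0).mono_left nhdsWithin_le_nhds
  refine ge_of_tendsto hlim ?_
  filter_upwards [Ioc_mem_nhdsGT (zero_lt_one' ℝ)] with t ht
  exact h t ht.1 ht.2

/-- If `a` minimizes the sum of two convex functions `f` on `D` and `g` on `G`, and `G` meets the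
interior of `D`, then `f` has a subgradient at `a`. -/
lemma ConvexOn.exists_subgradient_of_isMinOn_add {F : Type*} [NormedAddCommGroup F]
    [NormedSpace ℝ F] [FiniteDimensional ℝ F] {D G : Set F} {f g : F → ℝ}
    (hf : ConvexOn ℝ D f) (hg : ConvexOn ℝ G g) {q a : F} (hqD : q ∈ interior D) (hqG : q ∈ G)
    (haG : a ∈ G) (hmin : ∀ x ∈ D, x ∈ G → f a + g a ≤ f x + g x) :
    ∃ l : F →L[ℝ] ℝ, ∀ x ∈ D, f a + l (x - a) ≤ f x := by
  have hopen : IsOpen {p : F × ℝ | p.1 ∈ interior D ∧ f p.1 < p.2} := by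
    have hcont : ContinuousOn (fun p : F × ℝ => p.2 - f p.1) (interior D ×ˢ univ) :=
      continuousOn_snd.sub
        (hf.continuousOn_interior.comp continuousOn_fst fun p hp => hp.1)
    have := hcont.isOpen_inter_preimage (isOpen_interior.prod isOpen_univ) (isOpen_Ioi (a := 0))
    convert this using 1
    ext p
    simp
  have hepi := (hf.subset interior_subset hf.1.interior).convex_strict_epigraph
  have hhyp := ((concaveOn_const (f a + g a) hg.1).sub hg).convex_hypograph
  obtain ⟨L, s, hA, hB⟩ := geometric_hahn_banach_open hepi hopen hhyp <| by
    rw [Set.disjoint_left]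
    rintro ⟨x, r⟩ ⟨hxD, hr⟩ ⟨hxG, hr'⟩
    have := hmin x (interior_subset hxD) hxG
    simp only [Pi.sub_apply] at hr hr'
    linarith
  have hsplit : ∀ x r, L (x, r) = L (x, 0) + r * L (0, 1) := fun x r => by
    rw [← smul_eq_mul, ← map_smul, ← map_add]
    simp
  have hq₁ := fun r (hr : f q < r) => hA (q, r) ⟨hqD, hr⟩
  have hq₂ := fun r (hr : r ≤ f a + g a - g q) => hB (q, r) ⟨hqG, hr⟩
  set c := L (0, 1)
  have hc : c < 0 := by
    have h₁ := hq₁ (max (f q) (f a + g a - g q) + 1)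
      (lt_of_le_of_lt (le_max_left _ _) (lt_add_one _))
    have h₂ := hq₂ _ le_rfl
    rw [hsplit] at h₁ h₂
    have h₃ := le_max_right (f q) (f a + g a - g q)
    by_contra hc
    push Not at hc
    nlinarith
  have ha : s ≤ L (a, 0) + f a * c := by
    rw [← hsplit]
    exact hB (a, f a) ⟨haG, by simp⟩
  have hint : ∀ x ∈ interior D, L (x, 0) + f x * c ≤ L (a, 0) + f a * c := fun x hx => by
    refine le_of_forall_pos_le_add fun ε hε => ?_
    have h := hA (x, f x + ε / (-c)) ⟨hx, lt_add_of_pos_right _ (div_pos hε (neg_pos.2 hc))⟩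
    rw [hsplit] at h
    have : ε / (-c) * c = -ε := by
      rw [div_neg, neg_mul, div_mul_cancel₀ ε hc.ne]
    linarith
  have hall : ∀ x ∈ D, L (x, 0) + f x * c ≤ L (a, 0) + f a * c := fun x hx => by
    rw [← sub_nonneg]
    refine nonneg_of_forall_combo_nonneg
      (β := L (a, 0) + f a * c - (L (q, 0) + f q * c)) fun t ht₀ ht₁ => ?_
    have h₁ := hint _ (hf.1.combo_self_interior_mem_interior hx hqD (sub_nonneg.2 ht₁) ht₀
      (sub_add_cancel 1 t))
    have h₂ := hf.2 hx (interior_subset hqD) (sub_nonneg.2 ht₁) ht₀.le (sub_add_cancel 1 t)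
    have h₃ : L ((1 - t) • x + t • q, 0) = (1 - t) * L (x, 0) + t * L (q, 0) := by
      rw [← smul_eq_mul, ← smul_eq_mul, ← map_smul, ← map_smul, ← map_add]
      simp
    simp only [smul_eq_mul] at h₂
    nlinarith
  refine ⟨(-c)⁻¹ • L.comp (ContinuousLinearMap.inl ℝ F ℝ), fun x hx => ?_⟩
  have h₁ := hall x hx
  have h₂ : L (x - a, 0) = L (x, 0) - L (a, 0) := by
    rw [← map_sub]
    simp
  have h₃ : (-c)⁻¹ * L (x - a, 0) ≤ f x - f a := by
    rw [inv_mul_le_iff₀ (neg_pos.2 hc)]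
    linarith
  simpa [add_comm] using add_le_add_right h₃ (f a)

/-- A nonempty convex set in a finite-dimensional space has a point `p` such that the set spans an
affine subspace `p + V` in which `p` is an interior point. -/
lemma Convex.exists_submodule_zero_mem_interior {E : Type*} [NormedAddCommGroup E]
    [NormedSpace ℝ E] [FiniteDimensional ℝ E] {D : Set E} (hD : Convex ℝ D) (hne : D.Nonempty) :
    ∃ (p : E) (V : Submodule ℝ E), (∀ x ∈ D, x - p ∈ V) ∧
      (0 : V) ∈ interior {z : V | (z : E) + p ∈ D} := by
  obtain ⟨p, hp⟩ := hne.intrinsicInterior hD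
  obtain ⟨y, hy, rfl⟩ := mem_intrinsicInterior.1 hp
  refine ⟨y, (affineSpan ℝ D).direction, fun x hx =>
    AffineSubspace.vsub_mem_direction (subset_affineSpan ℝ D hx) y.2, ?_⟩
  let e : (affineSpan ℝ D).direction → affineSpan ℝ D := fun z =>
    ⟨(z : E) + y, AffineSubspace.vadd_mem_of_mem_direction z.2 y.2⟩
  have he : Continuous e := by
    apply Continuous.subtype_mk
    fun_prop
  refine mem_interior.2 ⟨e ⁻¹' interior ((↑) ⁻¹' D), fun z hz => ?_,
    isOpen_interior.preimage he, ?_⟩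
  · exact interior_subset (s := ((↑) ⁻¹' D : Set (affineSpan ℝ D))) hz
  · simpa [e] using hy

/-- Version of `ConvexOn.exists_subgradient_of_isMinOn_add` where the interior of `D` is taken
relative to an affine subspace `p + V` containing `D`. -/
lemma ConvexOn.exists_subgradient_of_isMinOn_add_of_submodule {E : Type*} [NormedAddCommGroup E]
    [NormedSpace ℝ E] [FiniteDimensional ℝ E] {D G : Set E} {f g : E → ℝ}
    (hf : ConvexOn ℝ D f) (hg : ConvexOn ℝ G g) {p : E} {V : Submodule ℝ E}
    (hV : ∀ x ∈ D, x - p ∈ V) {q : V} (hqD : q ∈ interior {z : V | (z : E) + p ∈ D})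
    (hqG : (q : E) + p ∈ G) {a : E} (haD : a ∈ D) (haG : a ∈ G)
    (hmin : ∀ x ∈ D, x ∈ G → f a + g a ≤ f x + g x) :
    ∃ l : E →L[ℝ] ℝ, ∀ x ∈ D, f a + l (x - a) ≤ f x := by
  let T : V →ᵃ[ℝ] E := V.subtype.toAffineMap + AffineMap.const ℝ V p
  have hT : ∀ z : V, T z = (z : E) + p := fun z => rfl
  have ha : T ⟨a - p, hV a haD⟩ = a := by simp [hT]
  obtain ⟨l, hl⟩ := (hf.comp_affineMap T).exists_subgradient_of_isMinOn_add
    (hg.comp_affineMap T) (q := q) (a := ⟨a - p, hV a haD⟩) hqD hqG (by simpa [ha] using haG)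
    (fun x hxD hxG => by simpa [ha] using hmin (T x) hxD hxG)
  obtain ⟨l', hl', -⟩ := exists_extension_norm_eq V l
  refine ⟨l', fun x hx => ?_⟩
  have hx' : T ⟨x - p, hV x hx⟩ = x := by simp [hT]
  have h := hl ⟨x - p, hV x hx⟩ (by simpa [hx'] using hx)
  rw [← hl'] at h
  simpa [ha, hx'] using h

/-- First-order optimality condition for the sum of a convex function and a differentiable one. -/
lemma ConvexOn.sub_le_of_isMinOn_add {E : Type*} [NormedAddCommGroup E] [NormedSpace ℝ E]
    {D G : Set E} {f g : E → ℝ} {g' : E →L[ℝ] ℝ} (hf : ConvexOn ℝ D f) (hG : Convex ℝ G) {a : E}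
    (hg : HasFDerivWithinAt g g' G a) (haD : a ∈ D) (haG : a ∈ G)
    (hmin : ∀ x ∈ D, x ∈ G → f a + g a ≤ f x + g x) {w : E} (hwD : w ∈ D) (hwG : w ∈ G) :
    f a - f w ≤ g' (w - a) := by
  have hcombo : ∀ t : ℝ, a + t • (w - a) = (1 - t) • a + t • w := fun t => by module
  have hmem : ∀ᶠ t : ℝ in 𝓝[>] 0, t ∈ Ioc (0 : ℝ) 1 := Ioc_mem_nhdsGT zero_lt_one
  have hlim : Tendsto (fun t : ℝ => t⁻¹ • (g (a + t • (w - a)) - g a)) (𝓝[>] 0)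
      (𝓝 (g' (w - a))) := by
    refine hg.lim ?_ ?_ ?_
    · have : Continuous fun t : ℝ => t • (w - a) := by fun_prop
      simpa using (this.tendsto 0).mono_left nhdsWithin_le_nhds
    · filter_upwards [hmem] with t ht
      rw [hcombo]
      exact hG haG hwG (sub_nonneg.2 ht.2) ht.1.le (sub_add_cancel 1 t)
    · refine tendsto_const_nhds.congr' ?_
      filter_upwards [hmem] with t ht
      rw [smul_smul, inv_mul_cancel₀ ht.1.ne', one_smul]
  refine ge_of_tendsto hlim ?_
  filter_upwards [hmem] with t ht
  have h₁ := hf.2 haD hwD (sub_nonneg.2 ht.2) ht.1.le (sub_add_cancel 1 t)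
  have h₂ := hmin _ (hf.1 haD hwD (sub_nonneg.2 ht.2) ht.1.le (sub_add_cancel 1 t))
    (hG haG hwG (sub_nonneg.2 ht.2) ht.1.le (sub_add_cancel 1 t))
  simp only [smul_eq_mul] at h₁ ⊢
  rw [hcombo, le_inv_mul_iff₀ ht.1]
  linarith

/-- The real-valued restriction of an extended-real-valued convex function to its domain is
convex. -/
lemma convexOn_toReal_of_ne_bot {E : Type*} [AddCommGroup E] [Module ℝ E]
    {ψ : E → EReal} (hbot : ∀ x, ψ x ≠ ⊥)
    (hconv : ∀ x y : E, ∀ t : ℝ, 0 ≤ t → t ≤ 1 →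
      ψ (t • x + (1 - t) • y) ≤ ((t : ℝ) : EReal) * ψ x + ((1 - t : ℝ) : EReal) * ψ y) :
    ConvexOn ℝ {x | ψ x ≠ ⊤} fun x => (ψ x).toReal := by
  have key : ∀ x y : E, ψ x ≠ ⊤ → ψ y ≠ ⊤ → ∀ s t : ℝ, 0 ≤ s → 0 ≤ t → s + t = 1 →
      ψ (s • x + t • y) ≤ ((s * (ψ x).toReal + t * (ψ y).toReal : ℝ) : EReal) := by
    intro x y hx hy s t hs ht hst
    obtain rfl : t = 1 - s := by linarith
    have h := hconv x y s hs (by linarith)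
    rw [← EReal.coe_toReal hx (hbot x), ← EReal.coe_toReal hy (hbot y)] at h
    exact_mod_cast h
  have hdom : ∀ {x : E} {r : ℝ}, ψ x ≤ r → ψ x ≠ ⊤ := fun h =>
    (h.trans_lt (EReal.coe_lt_top _)).ne
  refine ⟨fun x hx y hy s t hs ht hst => hdom (key x y hx hy s t hs ht hst),
    fun x hx y hy s t hs ht hst => ?_⟩
  have h := key x y hx hy s t hs ht hst
  exact EReal.toReal_le_toReal h (hbot _) (EReal.coe_ne_top _)

/-- A proper function is finite wherever it has a subgradient. -/
lemma ne_top_of_subdiff_nonempty {E : Type*} [NormedAddCommGroup E] [NormedSpace ℝ E]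
    {ψ : E → EReal} (htop : ∃ x, ψ x ≠ ⊤) {x : E} (hx : (ERealSubdiff ψ x).Nonempty) :
    ψ x ≠ ⊤ := by
  obtain ⟨g, hg⟩ := hx
  obtain ⟨y, hy⟩ := htop
  intro h
  have := hg y
  rw [h, EReal.top_add_coe, top_le_iff] at this
  exact hy this

/-- A subgradient of the real-valued restriction to the domain is a subgradient. -/
lemma subdiff_nonempty_of_toReal {E : Type*} [NormedAddCommGroup E] [NormedSpace ℝ E]
    {φ : E → EReal} (hbot : ∀ x, φ x ≠ ⊥) {x : E} (hx : φ x ≠ ⊤)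
    (h : ∃ l : E →L[ℝ] ℝ, ∀ y ∈ {y | φ y ≠ ⊤}, (φ x).toReal + l (y - x) ≤ (φ y).toReal) :
    (ERealSubdiff φ x).Nonempty := by
  obtain ⟨l, hl⟩ := h
  refine ⟨l, fun y => ?_⟩
  by_cases hy : φ y = ⊤
  · simp [hy]
  · rw [← EReal.coe_toReal hx (hbot x), ← EReal.coe_toReal hy (hbot y)]
    exact_mod_cast hl y hy

/-- **Non-Euclidean second prox theorem.** Let `ψ : E → (-∞, ∞]` be proper closed convex,
differentiable over `dom(∂ψ)` with gradient `ψ'`, let `φ : E → (-∞, ∞]` be proper closed convex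
with `dom(∂φ) ⊆ dom(∂ψ)`, and assume `ψ + I_{dom φ}` is `σ`-strongly convex. Let
`b ∈ dom(∂ψ)` and `a = argmin_{x ∈ E} { φ(x) + V_ψ(x, b) }`. Then for every `u ∈ dom φ`:
`⟨∇ψ(b) − ∇ψ(a), u − a⟩ ≤ φ(u) − φ(a)`. -/
theorem non_euclidean_second_prox_theorem
    {E : Type*} [NormedAddCommGroup E] [NormedSpace ℝ E] [FiniteDimensional ℝ E]
    (ψ φ : E → EReal) (ψ' : E → E →L[ℝ] ℝ) (σ : ℝ) (hσ : 0 < σ)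
    (hψ_bot : ∀ x, ψ x ≠ ⊥) (hψ_top : ∃ x, ψ x ≠ ⊤)
    (hψ_closed : LowerSemicontinuous ψ)
    (hψ_convex : ∀ x y : E, ∀ t : ℝ, 0 ≤ t → t ≤ 1 →
      ψ (t • x + (1 - t) • y) ≤ ((t : ℝ) : EReal) * ψ x + ((1 - t : ℝ) : EReal) * ψ y)
    (hψ_diff : ∀ x, (ERealSubdiff ψ x).Nonempty →
      HasFDerivWithinAt (fun y => (ψ y).toReal) (ψ' x) {y | ψ y ≠ ⊤} x)
    (hφ_bot : ∀ x, φ x ≠ ⊥) (hφ_top : ∃ x, φ x ≠ ⊤)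
    (hφ_closed : LowerSemicontinuous φ)
    (hφ_convex : ∀ x y : E, ∀ t : ℝ, 0 ≤ t → t ≤ 1 →
      φ (t • x + (1 - t) • y) ≤ ((t : ℝ) : EReal) * φ x + ((1 - t : ℝ) : EReal) * φ y)
    (hdom : {x | (ERealSubdiff φ x).Nonempty} ⊆ {x | (ERealSubdiff ψ x).Nonempty})
    -- `ψ + I_{dom φ}` is `σ`-strongly convex:
    (hstrong : ∀ x y : E, φ x ≠ ⊤ → φ y ≠ ⊤ → ∀ t : ℝ, 0 ≤ t → t ≤ 1 →
      ψ (t • x + (1 - t) • y) + ((σ / 2 * t * (1 - t) * ‖x - y‖ ^ 2 : ℝ) : EReal)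
        ≤ ((t : ℝ) : EReal) * ψ x + ((1 - t : ℝ) : EReal) * ψ y)
    (b : E) (hb : (ERealSubdiff ψ b).Nonempty)
    (a : E)
    (hmin : ∀ x : E,
      φ a + (ψ a - ψ b - ((ψ' b (a - b) : ℝ) : EReal))
        ≤ φ x + (ψ x - ψ b - ((ψ' b (x - b) : ℝ) : EReal)))
    (u : E) (hu : φ u ≠ ⊤) :
    ((ψ' b (u - a) - ψ' a (u - a) : ℝ) : EReal) ≤ φ u - φ a := by
  have hφc := convexOn_toReal_of_ne_bot hφ_bot hφ_convex
  have hψc := convexOn_toReal_of_ne_bot hψ_bot hψ_convex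
  obtain ⟨p, V, hV, h0⟩ := hφc.1.exists_submodule_zero_mem_interior hφ_top
  have hint : ∀ q : V, q ∈ interior {z : V | (z : E) + p ∈ {x | φ x ≠ ⊤}} →
      ψ ((q : E) + p) ≠ ⊤ := fun q hq => by
    have hqφ : φ ((q : E) + p) ≠ ⊤ := interior_subset hq
    refine ne_top_of_subdiff_nonempty hψ_top (hdom (subdiff_nonempty_of_toReal hφ_bot hqφ ?_))
    exact hφc.exists_subgradient_of_isMinOn_add_of_submodule
      (convexOn_const 0 (convex_singleton ((q : E) + p))) hV hq rfl hqφ rfl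
      fun x _ hx => by rw [mem_singleton_iff.1 hx]
  have hpφ : φ p ≠ ⊤ := by simpa using interior_subset h0
  have hpψ : ψ p ≠ ⊤ := by simpa using hint 0 h0
  have hbψ := ne_top_of_subdiff_nonempty hψ_top hb
  have hval : ∀ x, φ x ≠ ⊤ → ψ x ≠ ⊤ →
      φ x + (ψ x - ψ b - ((ψ' b (x - b) : ℝ) : EReal)) =
        (((φ x).toReal + ((ψ x).toReal - (ψ b).toReal - ψ' b (x - b)) : ℝ) : EReal) := by
    intro x hx hx'
    push_cast
    rw [EReal.coe_toReal hx (hφ_bot x), EReal.coe_toReal hx' (hψ_bot x),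
      EReal.coe_toReal hbψ (hψ_bot b)]
  have hmin_lt := (hmin p).trans_lt ((hval p hpφ hpψ).trans_lt (EReal.coe_lt_top _))
  have haψ : ψ a ≠ ⊤ := fun h => by
    rw [h, EReal.top_sub hbψ, EReal.top_sub (EReal.coe_ne_top _),
      EReal.add_top_of_ne_bot (hφ_bot a)] at hmin_lt
    exact lt_irrefl _ hmin_lt
  have haφ : φ a ≠ ⊤ := fun h => by
    rw [h, ← EReal.coe_toReal haψ (hψ_bot a), ← EReal.coe_toReal hbψ (hψ_bot b),
      ← EReal.coe_sub, ← EReal.coe_sub, EReal.top_add_coe] at hmin_lt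
    exact lt_irrefl _ hmin_lt
  have hmin' : ∀ x ∈ {x | φ x ≠ ⊤}, x ∈ {x | ψ x ≠ ⊤} →
      (φ a).toReal + ((ψ a).toReal - ψ' b a) ≤ (φ x).toReal + ((ψ x).toReal - ψ' b x) := by
    intro x hx hx'
    have h := hmin x
    rw [hval a haφ haψ, hval x hx hx', EReal.coe_le_coe_iff, map_sub, map_sub] at h
    linarith
  have hgc : ConvexOn ℝ {x | ψ x ≠ ⊤} fun x => (ψ x).toReal - ψ' b x :=
    hψc.sub ((ψ' b).toLinearMap.concaveOn hψc.1)
  have ha : (ERealSubdiff ψ a).Nonempty := hdom <| subdiff_nonempty_of_toReal hφ_bot haφ <|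
    hφc.exists_subgradient_of_isMinOn_add_of_submodule hgc hV h0 (hint 0 h0) haφ haψ hmin'
  have hderiv : HasFDerivWithinAt (fun x => (ψ x).toReal - ψ' b x) (ψ' a - ψ' b)
      {x | ψ x ≠ ⊤} a := (hψ_diff a ha).sub (ψ' b).hasFDerivWithinAt
  have hopt : ∀ w, φ w ≠ ⊤ → ψ w ≠ ⊤ →
      (φ a).toReal - (φ w).toReal ≤ ψ' a (w - a) - ψ' b (w - a) := fun w hw hw' =>
    hφc.sub_le_of_isMinOn_add hψc.1 hderiv haφ haψ hmin' hw hw'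
  have hfinal : 0 ≤ (φ u).toReal - (φ a).toReal + (ψ' a (u - a) - ψ' b (u - a)) := by
    refine nonneg_of_forall_combo_nonneg
      (β := (φ p).toReal - (φ a).toReal + (ψ' a (p - a) - ψ' b (p - a))) fun t ht₀ ht₁ => ?_
    have hsum : 1 - t + t = 1 := sub_add_cancel 1 t
    let T : V →ᵃ[ℝ] E := V.subtype.toAffineMap + AffineMap.const ℝ V p
    have hmem := (hφc.1.affine_preimage T).combo_self_interior_mem_interior
      (x := ⟨u - p, hV u hu⟩) (by simpa [T] using hu) h0 (sub_nonneg.2 ht₁) ht₀ hsum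
    have hw := hint _ hmem
    have hw_eq : (((1 - t) • (⟨u - p, hV u hu⟩ : V) + t • (0 : V) : V) : E) + p =
        (1 - t) • u + t • p := by
      simp only [smul_zero, add_zero, Submodule.coe_smul]
      module
    rw [hw_eq] at hw
    have h₁ := hopt _ (hφc.1 hu hpφ (sub_nonneg.2 ht₁) ht₀.le hsum) hw
    have h₂ := hφc.2 hu hpφ (sub_nonneg.2 ht₁) ht₀.le hsum
    have h₃ : (1 - t) • u + t • p - a = (1 - t) • (u - a) + t • (p - a) := by module
    rw [h₃] at h₁
    simp only [map_add, map_smul, smul_eq_mul] at h₁ h₂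
    linarith
  rw [← EReal.coe_toReal hu (hφ_bot u), ← EReal.coe_toReal haφ (hφ_bot a), ← EReal.coe_sub,
    EReal.coe_le_coe_iff]
  linarith
end

section
/- Let Q ⊆ E be a compact convex set, ψ : Q → ℝ a differentiable σ-strongly convex prox-function (σ > 0), g ∈ E*, γ > 0, y ∈ Q, and let x⁺ = argmin_{x ∈ Q} { ⟨g, x⟩ + (1/γ) V_ψ(x, y) }. Then for every u ∈ Q: γ ⟨g, x⁺ − u⟩ ≤ V_ψ(u, y) − V_ψ(u, x⁺) − (σ/2) ‖x⁺ − y‖². -/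
/-- The Bregman divergence `V_ψ(x, y) = ψ(x) − ψ(y) − ⟨∇ψ(y), x − y⟩` associated with a
differentiable function `ψ` with gradient `ψ'`. -/
noncomputable def bregman {E : Type*} [NormedAddCommGroup E] [NormedSpace ℝ E]
    (ψ : E → ℝ) (ψ' : E → E →L[ℝ] ℝ) (x y : E) : ℝ :=
  ψ x - ψ y - ψ' y (x - y)

/-- The Bregman divergence of a `σ`-strongly convex function dominates `(σ / 2) ‖x - y‖²`. -/
theorem StrongConvexOn.le_bregman {E : Type*} [NormedAddCommGroup E] [NormedSpace ℝ E]
    {Q : Set E} {ψ : E → ℝ} {ψ' : E → E →L[ℝ] ℝ} {σ : ℝ} (hψ : StrongConvexOn Q σ ψ)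
    {x y : E} (hx : x ∈ Q) (hy : y ∈ Q) (hd : HasFDerivWithinAt ψ (ψ' y) Q y) :
    σ / 2 * ‖x - y‖ ^ 2 ≤ bregman ψ ψ' x y := by
  set c : ℝ := σ / 2 * ‖x - y‖ ^ 2 with hc
  have hmaps : Set.MapsTo (fun t : ℝ => y + t • (x - y)) (Set.Icc 0 1) Q :=
    fun t ht => hψ.1.add_smul_sub_mem hy hx ht
  have hline : HasDerivWithinAt (fun t : ℝ => y + t • (x - y)) (x - y) (Set.Icc 0 1) 0 := by
    simpa using (((hasDerivAt_id (0 : ℝ)).smul_const (x - y)).const_add y).hasDerivWithinAt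
  have hcomp : HasDerivWithinAt (fun t : ℝ => ψ (y + t • (x - y))) (ψ' y (x - y))
      (Set.Icc 0 1) 0 :=
    HasFDerivWithinAt.comp_hasDerivWithinAt (0 : ℝ) (by simpa using hd) hline hmaps
  have hid : HasDerivWithinAt (fun t : ℝ => t) 1 (Set.Icc 0 1) 0 := hasDerivWithinAt_id _ _
  -- the gap in the strong convexity inequality along the segment, minimal at `0`
  have hgap := (((hid.const_sub 1).mul_const (ψ y)).add (hid.mul_const (ψ x))).sub
    ((hid.mul (hid.const_sub 1)).mul_const c) |>.sub hcomp
  have hmin : IsMinOn (fun t : ℝ => (1 - t) * ψ y + t * ψ x - t * (1 - t) * c -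
      ψ (y + t • (x - y))) (Set.Icc 0 1) 0 := by
    intro t ht
    have h := hψ.2 hx hy ht.1 (sub_nonneg.2 ht.2) (by ring)
    have hpt : t • x + (1 - t) • y = y + t • (x - y) := by module
    simp only [hpt, smul_eq_mul] at h
    rw [← hc] at h
    simp only [Set.mem_ofPred_eq, zero_smul, add_zero]
    linarith
  have hnonneg := hmin.localize.hasFDerivWithinAt_nonneg hgap.hasFDerivWithinAt
    (sub_mem_posTangentConeAt_of_segment_subset (y := 1) (by rw [segment_eq_Icc zero_le_one]))
  simp only [ContinuousLinearMap.toSpanSingleton_apply, sub_zero, one_smul] at hnonneg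
  unfold bregman
  linarith

/-- Let `Q ⊆ E` be compact convex, `ψ` a differentiable `σ`-strongly convex prox-function
(`σ > 0`), `g ∈ E*`, `γ > 0`, `y ∈ Q`, and `x⁺ = argmin_{x ∈ Q} { ⟨g, x⟩ + (1/γ) V_ψ(x, y) }`.
Then for every `u ∈ Q`: `γ ⟨g, x⁺ − u⟩ ≤ V_ψ(u, y) − V_ψ(u, x⁺) − (σ/2) ‖x⁺ − y‖²`. -/
theorem mirror_prox_step
    {E : Type*} [NormedAddCommGroup E] [NormedSpace ℝ E] [FiniteDimensional ℝ E]
    (Q : Set E) (hQcomp : IsCompact Q) (hQconv : Convex ℝ Q)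
    (ψ : E → ℝ) (ψ' : E → E →L[ℝ] ℝ) (σ : ℝ) (hσ : 0 < σ)
    (hψdiff : ∀ x ∈ Q, HasFDerivWithinAt ψ (ψ' x) Q x)
    (hψstrong : StrongConvexOn Q σ ψ)
    (g : E →L[ℝ] ℝ) (γ : ℝ) (hγ : 0 < γ) (y : E) (hy : y ∈ Q)
    (xp : E) (hxpQ : xp ∈ Q)
    (hxp : IsMinOn (fun x => g x + (1 / γ) * bregman ψ ψ' x y) Q xp) :
    ∀ u ∈ Q,
      γ * g (xp - u) ≤
        bregman ψ ψ' u y - bregman ψ ψ' u xp - σ / 2 * ‖xp - y‖ ^ 2 := by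
  intro u hu
  have hbreg : HasFDerivWithinAt (fun x => bregman ψ ψ' x y) (ψ' xp - ψ' y) Q xp :=
    ((hψdiff xp hxpQ).sub_const (ψ y)).sub
      ((ψ' y).hasFDerivWithinAt.comp xp ((hasFDerivWithinAt_id xp Q).sub_const y)
        (Set.mapsTo_univ _ _) (t := Set.univ))
  have hopt := hxp.localize.hasFDerivWithinAt_nonneg
    (g.hasFDerivWithinAt.add (hbreg.const_mul (1 / γ)))
    (sub_mem_posTangentConeAt_of_segment_subset (hQconv.segment_subset hxpQ hu))
  have hlower := hψstrong.le_bregman hxpQ hy (hψdiff y hy)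
  have hopt' : 0 ≤ γ * g (u - xp) + (ψ' xp - ψ' y) (u - xp) := by
    have h := mul_nonneg hγ.le hopt
    simp only [add_apply, smul_apply, smul_eq_mul] at h
    rwa [mul_add, ← mul_assoc γ (1 / γ), mul_one_div_cancel hγ.ne', one_mul] at h
  simp only [bregman, map_sub, sub_apply] at hopt' hlower ⊢
  linarith
end

section
/- Let a ∈ [0, 1], −1 ≤ m ≤ 0, σ > 0, R > 0, and g_1, …, g_N positive reals. Set G_k = max_{j=1,…,k} { g_j · j^{(1−a)/2} } and γ_k = √(2σR)/(G_k k^{a/2}). Then ( R / γ_N^{m+1} + ∑_{k=1}^N (γ_k^{1−m}/(2σ)) g_k² ) / ( ∑_{k=1}^N γ_k^{−m} ) ≤ √(R/(2σ)) · ( N^{(m+1)/2} + ∑_{k=1}^N k^{(m−1)/2} ) / ( ∑_{k=1}^N k^{m/2} ) · max_{k=1,…,N} g_k. -/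
/-- Power of the step-size lower bound `c / (M √x)`, split into its factors. -/
lemma rpow_div_mul_sqrt {c M x : ℝ} (hc : 0 < c) (hM : 0 < M) (hx : 0 < x) (p : ℝ) :
    (c / (M * x ^ (1 / 2 : ℝ))) ^ p = c ^ p * M ^ (-p) * x ^ (-p / 2) := by
  rw [Real.div_rpow hc.le (by positivity), Real.mul_rpow hM.le (by positivity),
    ← Real.rpow_mul hx.le, Real.rpow_neg hM.le, show -p / 2 = -(1 / 2 * p) by ring,
    Real.rpow_neg hx.le]
  field_simp

/-- The algebraic estimate of the main convergence theorem in the case `−1 ≤ m ≤ 0`,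
with `G_k = max_{j=1,…,k}{ g_j · j^{(1−a)/2} }` and `γ_k = √(2σR)/(G_k k^{a/2})`:
`(R/γ_N^{m+1} + ∑ γ_k^{1−m} g_k²/(2σ)) / (∑ γ_k^{−m})
  ≤ √(R/(2σ)) · (N^{(m+1)/2} + ∑ k^{(m−1)/2}) / (∑ k^{m/2}) · max_k g_k`. -/
theorem algebra_estimate_m_nonpos
    (N : ℕ) (hN : 1 ≤ N) (a m σ R : ℝ)
    (ha0 : 0 ≤ a) (ha1 : a ≤ 1) (hm1 : -1 ≤ m) (hm0 : m ≤ 0)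
    (hσ : 0 < σ) (hR : 0 < R)
    (g G γ : ℕ → ℝ)
    (hg : ∀ k, 1 ≤ k → k ≤ N → 0 < g k)
    (hG : ∀ k (hk : 1 ≤ k), k ≤ N →
      G k = (Finset.Icc 1 k).sup' (Finset.nonempty_Icc.mpr hk)
        (fun j => g j * (j : ℝ) ^ ((1 - a) / 2)))
    (hγ : ∀ k, 1 ≤ k → k ≤ N →
      γ k = Real.sqrt (2 * σ * R) / (G k * (k : ℝ) ^ (a / 2))) :
    (R / γ N ^ (m + 1)
        + ∑ k ∈ Finset.Icc 1 N, γ k ^ (1 - m) / (2 * σ) * g k ^ 2)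
      / (∑ k ∈ Finset.Icc 1 N, γ k ^ (-m))
    ≤ Real.sqrt (R / (2 * σ))
        * (((N : ℝ) ^ ((m + 1) / 2) + ∑ k ∈ Finset.Icc 1 N, (k : ℝ) ^ ((m - 1) / 2))
            / (∑ k ∈ Finset.Icc 1 N, (k : ℝ) ^ (m / 2)))
        * (Finset.Icc 1 N).sup' (Finset.nonempty_Icc.mpr hN) g := by
  set M := (Finset.Icc 1 N).sup' (Finset.nonempty_Icc.mpr hN) g
  set c := Real.sqrt (2 * σ * R) with hcdef
  set s := Real.sqrt (R / (2 * σ)) with hsdef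
  have hc : 0 < c := Real.sqrt_pos.mpr (by positivity)
  have hcs : c * s = R := by
    rw [hcdef, hsdef, ← Real.sqrt_mul (by positivity),
      show 2 * σ * R * (R / (2 * σ)) = R ^ 2 by field_simp, Real.sqrt_sq hR.le]
  have hc2 : c ^ 2 = 2 * σ * R := Real.sq_sqrt (by positivity)
  have hgM : ∀ k, 1 ≤ k → k ≤ N → g k ≤ M := fun k h1 h2 =>
    Finset.le_sup' g (Finset.mem_Icc.mpr ⟨h1, h2⟩)
  have hM : 0 < M := (hg 1 le_rfl hN).trans_le (hgM 1 le_rfl hN)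
  have hcast : ∀ k : ℕ, 1 ≤ k → (0 : ℝ) < k := fun k h => by exact_mod_cast h
  have hsplit : ∀ k : ℕ, 1 ≤ k →
      (k : ℝ) ^ ((1 - a) / 2) * (k : ℝ) ^ (a / 2) = (k : ℝ) ^ (1 / 2 : ℝ) := fun k h => by
    rw [← Real.rpow_add (hcast k h)]
    ring_nf
  have hGlow : ∀ k, 1 ≤ k → k ≤ N →
      g k * (k : ℝ) ^ (1 / 2 : ℝ) ≤ G k * (k : ℝ) ^ (a / 2) := fun k h1 h2 => by
    have hle : g k * (k : ℝ) ^ ((1 - a) / 2) ≤ G k := by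
      rw [hG k h1 h2]
      exact Finset.le_sup' (fun j : ℕ => g j * (j : ℝ) ^ ((1 - a) / 2))
        (Finset.mem_Icc.mpr ⟨h1, le_rfl⟩)
    rw [← hsplit k h1, ← mul_assoc]
    gcongr
  have hGup : ∀ k, 1 ≤ k → k ≤ N →
      G k * (k : ℝ) ^ (a / 2) ≤ M * (k : ℝ) ^ (1 / 2 : ℝ) := fun k h1 h2 => by
    have hle : G k ≤ M * (k : ℝ) ^ ((1 - a) / 2) := by
      rw [hG k h1 h2]
      refine Finset.sup'_le _ _ fun j hj => ?_
      obtain ⟨hj1, hjk⟩ := Finset.mem_Icc.mp hj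
      exact mul_le_mul (hgM j hj1 (hjk.trans h2))
        (Real.rpow_le_rpow (Nat.cast_nonneg j) (Nat.cast_le.mpr hjk) (by linarith))
        (by positivity) hM.le
    rw [← hsplit k h1, ← mul_assoc]
    gcongr
  have hΓ : ∀ k, 1 ≤ k → k ≤ N → 0 < G k * (k : ℝ) ^ (a / 2) := fun k h1 h2 =>
    (mul_pos (hg k h1 h2) (Real.rpow_pos_of_pos (hcast k h1) _)).trans_le (hGlow k h1 h2)
  have hγpos : ∀ k, 1 ≤ k → k ≤ N → 0 < γ k := fun k h1 h2 => by
    rw [hγ k h1 h2]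
    exact div_pos hc (hΓ k h1 h2)
  have hγlow : ∀ k, 1 ≤ k → k ≤ N → c / (M * (k : ℝ) ^ (1 / 2 : ℝ)) ≤ γ k := fun k h1 h2 => by
    rw [hγ k h1 h2]
    exact div_le_div_of_nonneg_left hc.le (hΓ k h1 h2) (hGup k h1 h2)
  have hdpos : ∀ k : ℕ, 1 ≤ k → 0 < c / (M * (k : ℝ) ^ (1 / 2 : ℝ)) := fun k h1 => by
    have := hcast k h1
    positivity
  have hγg : ∀ k, 1 ≤ k → k ≤ N → (γ k * g k) ^ 2 ≤ c ^ 2 / k := fun k h1 h2 => by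
    have hk := hcast k h1
    have hroot : ((k : ℝ) ^ (1 / 2 : ℝ)) ^ 2 = k := by
      rw [← Real.sqrt_eq_rpow, Real.sq_sqrt hk.le]
    have hle : γ k * g k ≤ c / (k : ℝ) ^ (1 / 2 : ℝ) := by
      rw [hγ k h1 h2, div_mul_eq_mul_div, div_le_div_iff₀ (hΓ k h1 h2) (by positivity), mul_assoc]
      exact mul_le_mul_of_nonneg_left (hGlow k h1 h2) hc.le
    calc (γ k * g k) ^ 2 ≤ (c / (k : ℝ) ^ (1 / 2 : ℝ)) ^ 2 :=
          pow_le_pow_left₀ (mul_pos (hγpos k h1 h2) (hg k h1 h2)).le hle 2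
      _ = c ^ 2 / k := by rw [div_pow, hroot]
  have hcneg : R * c ^ (-(m + 1)) = s * c ^ (-m) := by
    rw [show -(m + 1) = -m - 1 by ring, Real.rpow_sub_one hc.ne', ← hcs]
    field_simp
  have hfirst : R / γ N ^ (m + 1) ≤ s * c ^ (-m) * M ^ (m + 1) * (N : ℝ) ^ ((m + 1) / 2) := by
    calc R / γ N ^ (m + 1) = R * γ N ^ (-(m + 1)) := by
          rw [Real.rpow_neg (hγpos N hN le_rfl).le, div_eq_mul_inv]
      _ ≤ R * (c / (M * (N : ℝ) ^ (1 / 2 : ℝ))) ^ (-(m + 1)) :=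
          mul_le_mul_of_nonneg_left (Real.rpow_le_rpow_of_nonpos (hdpos N hN)
            (hγlow N hN le_rfl) (by linarith)) hR.le
      _ = _ := by
          rw [rpow_div_mul_sqrt hc hM (hcast N hN), neg_neg, ← hcneg]
          ring
  have hterm : ∀ k ∈ Finset.Icc 1 N, γ k ^ (1 - m) / (2 * σ) * g k ^ 2
      ≤ s * c ^ (-m) * M ^ (m + 1) * (k : ℝ) ^ ((m - 1) / 2) := fun k hk => by
    obtain ⟨h1, h2⟩ := Finset.mem_Icc.mp hk
    have hk0 := hcast k h1
    calc γ k ^ (1 - m) / (2 * σ) * g k ^ 2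
        = γ k ^ (-(m + 1)) * (γ k * g k) ^ 2 / (2 * σ) := by
          rw [show 1 - m = -(m + 1) + 2 by ring, Real.rpow_add (hγpos k h1 h2), Real.rpow_two]
          ring
      _ ≤ (c / (M * (k : ℝ) ^ (1 / 2 : ℝ))) ^ (-(m + 1)) * (c ^ 2 / k) / (2 * σ) := by
          refine div_le_div_of_nonneg_right (mul_le_mul ?_ (hγg k h1 h2) (sq_nonneg _)
            (Real.rpow_nonneg (hdpos k h1).le _)) (by positivity)
          exact Real.rpow_le_rpow_of_nonpos (hdpos k h1) (hγlow k h1 h2) (by linarith)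
      _ = _ := by
          rw [rpow_div_mul_sqrt hc hM hk0, neg_neg, ← hcneg, hc2,
            show (m - 1) / 2 = (m + 1) / 2 - 1 by ring, Real.rpow_sub_one hk0.ne']
          field_simp
  have hnum : R / γ N ^ (m + 1) + ∑ k ∈ Finset.Icc 1 N, γ k ^ (1 - m) / (2 * σ) * g k ^ 2
      ≤ s * c ^ (-m) * M ^ (m + 1) *
        ((N : ℝ) ^ ((m + 1) / 2) + ∑ k ∈ Finset.Icc 1 N, (k : ℝ) ^ ((m - 1) / 2)) := by
    rw [mul_add, Finset.mul_sum]
    exact add_le_add hfirst (Finset.sum_le_sum hterm)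
  have hden : c ^ (-m) * M ^ m * ∑ k ∈ Finset.Icc 1 N, (k : ℝ) ^ (m / 2)
      ≤ ∑ k ∈ Finset.Icc 1 N, γ k ^ (-m) := by
    rw [Finset.mul_sum]
    refine Finset.sum_le_sum fun k hk => ?_
    obtain ⟨h1, h2⟩ := Finset.mem_Icc.mp hk
    have hle := Real.rpow_le_rpow (hdpos k h1).le (hγlow k h1 h2) (neg_nonneg.mpr hm0)
    rwa [rpow_div_mul_sqrt hc hM (hcast k h1), neg_neg] at hle
  have hB : 0 < ∑ k ∈ Finset.Icc 1 N, (k : ℝ) ^ (m / 2) :=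
    Finset.sum_pos (fun k hk => Real.rpow_pos_of_pos (hcast k (Finset.mem_Icc.mp hk).1) _)
      (Finset.nonempty_Icc.mpr hN)
  refine (div_le_div₀ (by positivity) hnum (by positivity) hden).trans_eq ?_
  rw [Real.rpow_add_one hM.ne']
  have hcm : c ^ (-m) ≠ 0 := (Real.rpow_pos_of_pos hc _).ne'
  have hMm : M ^ m ≠ 0 := (Real.rpow_pos_of_pos hM _).ne'
  field_simp
end

section
/- Let a ∈ [0, 1], m > 0, σ > 0, R > 0, and g_1, …, g_N positive reals. Set G_k = max_{j=1,…,k} { g_j · j^{(1−a)/2} } and γ_k = √(2σR)/(G_k k^{a/2}). Then ( R · N^{m/2} / γ_N + ∑_{k=1}^N (k^{m/2} γ_k/(2σ)) g_k² ) / ( ∑_{k=1}^N k^{m/2} ) ≤ √(R/(2σ)) · ( N^{(m+1)/2} + ∑_{k=1}^N k^{(m−1)/2} ) / ( ∑_{k=1}^N k^{m/2} ) · max_{k=1,…,N} g_k. -/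
/-- The algebraic estimate of the main convergence theorem in the case `m > 0`,
with `G_k = max_{j=1,…,k}{ g_j · j^{(1−a)/2} }` and `γ_k = √(2σR)/(G_k k^{a/2})`:
`(R N^{m/2}/γ_N + ∑ k^{m/2} γ_k g_k²/(2σ)) / (∑ k^{m/2})
  ≤ √(R/(2σ)) · (N^{(m+1)/2} + ∑ k^{(m−1)/2}) / (∑ k^{m/2}) · max_k g_k`. -/
theorem algebra_estimate_m_pos
    (N : ℕ) (hN : 1 ≤ N) (a m σ R : ℝ)
    (ha0 : 0 ≤ a) (ha1 : a ≤ 1) (hm : 0 < m)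
    (hσ : 0 < σ) (hR : 0 < R)
    (g G γ : ℕ → ℝ)
    (hg : ∀ k, 1 ≤ k → k ≤ N → 0 < g k)
    (hG : ∀ k (hk : 1 ≤ k), k ≤ N →
      G k = (Finset.Icc 1 k).sup' (Finset.nonempty_Icc.mpr hk)
        (fun j => g j * (j : ℝ) ^ ((1 - a) / 2)))
    (hγ : ∀ k, 1 ≤ k → k ≤ N →
      γ k = Real.sqrt (2 * σ * R) / (G k * (k : ℝ) ^ (a / 2))) :
    (R * (N : ℝ) ^ (m / 2) / γ N
        + ∑ k ∈ Finset.Icc 1 N, (k : ℝ) ^ (m / 2) * γ k / (2 * σ) * g k ^ 2)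
      / (∑ k ∈ Finset.Icc 1 N, (k : ℝ) ^ (m / 2))
    ≤ Real.sqrt (R / (2 * σ))
        * (((N : ℝ) ^ ((m + 1) / 2) + ∑ k ∈ Finset.Icc 1 N, (k : ℝ) ^ ((m - 1) / 2))
            / (∑ k ∈ Finset.Icc 1 N, (k : ℝ) ^ (m / 2)))
        * (Finset.Icc 1 N).sup' (Finset.nonempty_Icc.mpr hN) g := by
  set M := (Finset.Icc 1 N).sup' (Finset.nonempty_Icc.mpr hN) g
  set s := Real.sqrt (2 * σ * R) with hs
  set c := Real.sqrt (R / (2 * σ))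
  have hs0 : 0 < s := Real.sqrt_pos.mpr (by positivity)
  have hc0 : 0 < c := Real.sqrt_pos.mpr (by positivity)
  have hsc : s = 2 * σ * c := by
    have hsq : 2 * σ * R = (2 * σ) ^ 2 * (R / (2 * σ)) := by field_simp
    rw [hs, hsq, Real.sqrt_mul (by positivity), Real.sqrt_sq (by positivity)]
  have hR_eq : R = c * s := by
    have hcc : c * c = R / (2 * σ) := Real.mul_self_sqrt (by positivity)
    rw [hsc, mul_left_comm, hcc]
    field_simp
  have hgM : ∀ k ∈ Finset.Icc 1 N, g k ≤ M := fun k hk => Finset.le_sup' g hk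
  have hM0 : 0 < M := (hg N hN le_rfl).trans_le (hgM N (Finset.mem_Icc.mpr ⟨hN, le_rfl⟩))
  have hG_ge : ∀ k, 1 ≤ k → k ≤ N → g k * (k : ℝ) ^ ((1 - a) / 2) ≤ G k := by
    intro k hk hkN
    rw [hG k hk hkN]
    exact Finset.le_sup' (fun j : ℕ => g j * (j : ℝ) ^ ((1 - a) / 2))
      (Finset.mem_Icc.mpr ⟨hk, le_rfl⟩)
  have hG_le : G N ≤ M * (N : ℝ) ^ ((1 - a) / 2) := by
    rw [hG N hN le_rfl]
    refine Finset.sup'_le _ _ fun j hj => ?_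
    have hjN : (j : ℝ) ≤ N := by exact_mod_cast (Finset.mem_Icc.mp hj).2
    exact mul_le_mul (hgM j hj)
      (Real.rpow_le_rpow (by positivity) hjN (by linarith)) (by positivity) hM0.le
  have h_last : R * (N : ℝ) ^ (m / 2) / γ N ≤ c * (N : ℝ) ^ ((m + 1) / 2) * M := by
    have hN0 : (0 : ℝ) < N := by exact_mod_cast hN
    have hexp : (N : ℝ) ^ ((m + 1) / 2)
        = (N : ℝ) ^ (m / 2) * (N : ℝ) ^ (a / 2) * (N : ℝ) ^ ((1 - a) / 2) := by
      rw [← Real.rpow_add hN0, ← Real.rpow_add hN0]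
      ring_nf
    calc R * (N : ℝ) ^ (m / 2) / γ N
        = c * (N : ℝ) ^ (m / 2) * (N : ℝ) ^ (a / 2) * G N := by
          rw [hγ N hN le_rfl, hR_eq, div_div_eq_mul_div]
          field_simp
      _ ≤ c * (N : ℝ) ^ (m / 2) * (N : ℝ) ^ (a / 2) * (M * (N : ℝ) ^ ((1 - a) / 2)) := by
          gcongr
      _ = c * (N : ℝ) ^ ((m + 1) / 2) * M := by
          rw [hexp]
          ring
  have h_term : ∀ k ∈ Finset.Icc 1 N,
      (k : ℝ) ^ (m / 2) * γ k / (2 * σ) * g k ^ 2 ≤ c * (k : ℝ) ^ ((m - 1) / 2) * M := by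
    intro k hk
    obtain ⟨hk1, hkN⟩ := Finset.mem_Icc.mp hk
    have hk0 : (0 : ℝ) < k := by exact_mod_cast hk1
    have hgk := hg k hk1 hkN
    have hexp : (k : ℝ) ^ (m / 2)
        = (k : ℝ) ^ ((m - 1) / 2) * (k : ℝ) ^ ((1 - a) / 2) * (k : ℝ) ^ (a / 2) := by
      rw [← Real.rpow_add hk0, ← Real.rpow_add hk0]
      ring_nf
    calc (k : ℝ) ^ (m / 2) * γ k / (2 * σ) * g k ^ 2
        ≤ (k : ℝ) ^ (m / 2) * (s / (g k * (k : ℝ) ^ ((1 - a) / 2) * (k : ℝ) ^ (a / 2)))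
            / (2 * σ) * g k ^ 2 := by
          rw [hγ k hk1 hkN]
          gcongr
          exact hG_ge k hk1 hkN
      _ = c * (k : ℝ) ^ ((m - 1) / 2) * g k := by
          rw [hexp, hsc]
          field_simp
      _ ≤ c * (k : ℝ) ^ ((m - 1) / 2) * M := by
          gcongr
          exact hgM k hk
  rw [mul_div_assoc', div_mul_eq_mul_div]
  refine div_le_div_of_nonneg_right ?_ (Finset.sum_nonneg fun k _ => by positivity)
  calc _ ≤ c * (N : ℝ) ^ ((m + 1) / 2) * M
        + ∑ k ∈ Finset.Icc 1 N, c * (k : ℝ) ^ ((m - 1) / 2) * M :=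
        add_le_add h_last (Finset.sum_le_sum h_term)
    _ = _ := by
        rw [← Finset.sum_mul, ← Finset.mul_sum]
        ring
end

section
/- Let a ∈ [0, 1], −1 ≤ m ≤ 0, σ > 0, R > 0, and g_1, …, g_N positive reals. Set G_k = max_{j=1,…,k} { g_j · j^{(1−a)/2} }, γ_k = √(2σR)/(G_k k^{a/2}), and ω_k^{(m)} = γ_k^{−m}. Then for any H ≥ 0 (playing the role of h(x^1)): ω_1^{(m)} H / ( ∑_{k=1}^N ω_k^{(m)} ) ≤ ( g_1 / max_{k=1,…,N} g_k )^m · H / ( ∑_{k=1}^N k^{m/2} ). -/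
/-- With `G_k = max_{j=1,…,k}{g_j j^{(1−a)/2}}`, `γ_k = √(2σR)/(G_k k^{a/2})`,
`ω_k = γ_k^{−m}` for `−1 ≤ m ≤ 0`, and any `H ≥ 0`:
`ω_1 H / (∑ ω_k) ≤ (g_1 / max_k g_k)^m · H / (∑ k^{m/2})`. -/
theorem composite_initial_weight_bound
    (N : ℕ) (hN : 1 ≤ N) (a m σ R : ℝ)
    (ha0 : 0 ≤ a) (ha1 : a ≤ 1) (hm1 : -1 ≤ m) (hm0 : m ≤ 0)
    (hσ : 0 < σ) (hR : 0 < R)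
    (g G γ ω : ℕ → ℝ)
    (hg : ∀ k, 1 ≤ k → k ≤ N → 0 < g k)
    (hG : ∀ k (hk : 1 ≤ k), k ≤ N →
      G k = (Finset.Icc 1 k).sup' (Finset.nonempty_Icc.mpr hk)
        (fun j => g j * (j : ℝ) ^ ((1 - a) / 2)))
    (hγ : ∀ k, 1 ≤ k → k ≤ N →
      γ k = Real.sqrt (2 * σ * R) / (G k * (k : ℝ) ^ (a / 2)))
    (hω : ∀ k, 1 ≤ k → k ≤ N → ω k = γ k ^ (-m))
    (H : ℝ) (hH : 0 ≤ H) :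
    ω 1 * H / (∑ k ∈ Finset.Icc 1 N, ω k) ≤
      (g 1 / (Finset.Icc 1 N).sup' (Finset.nonempty_Icc.mpr hN) g) ^ m * H
        / (∑ k ∈ Finset.Icc 1 N, (k : ℝ) ^ (m / 2)) := by
  set M := (Finset.Icc 1 N).sup' (Finset.nonempty_Icc.mpr hN) g
  have hc : 0 < Real.sqrt (2 * σ * R) := Real.sqrt_pos.mpr (by positivity)
  have hg1 : 0 < g 1 := hg 1 le_rfl hN
  have hgM : ∀ j, 1 ≤ j → j ≤ N → g j ≤ M := fun j h1 h2 =>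
    Finset.le_sup' g (Finset.mem_Icc.mpr ⟨h1, h2⟩)
  have hMpos : 0 < M := hg1.trans_le (hgM 1 le_rfl hN)
  have hG1 : G 1 = g 1 := by simp [hG 1 le_rfl hN]
  have hGpos : ∀ k, 1 ≤ k → k ≤ N → 0 < G k := by
    intro k h1 h2
    rw [hG k h1 h2]
    refine lt_of_lt_of_le ?_ (Finset.le_sup' (fun j : ℕ => g j * (j : ℝ) ^ ((1 - a) / 2))
      (Finset.mem_Icc.mpr ⟨le_rfl, h1⟩))
    simpa using hg1
  have hGle : ∀ k, 1 ≤ k → k ≤ N → G k ≤ M * (k : ℝ) ^ ((1 - a) / 2) := by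
    intro k h1 h2
    rw [hG k h1 h2]
    refine Finset.sup'_le _ _ fun j hj => ?_
    obtain ⟨hj1, hjk⟩ := Finset.mem_Icc.mp hj
    have hjk' : (j : ℝ) ≤ k := by exact_mod_cast hjk
    exact mul_le_mul (hgM j hj1 (hjk.trans h2))
      (Real.rpow_le_rpow (by positivity) hjk' (by linarith)) (by positivity) hMpos.le
  have hγpos : ∀ k, 1 ≤ k → k ≤ N → 0 < γ k := by
    intro k h1 h2
    have hk : (0 : ℝ) < k := by exact_mod_cast h1
    have := hGpos k h1 h2
    rw [hγ k h1 h2]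
    positivity
  have hωpos : ∀ k, 1 ≤ k → k ≤ N → 0 < ω k := by
    intro k h1 h2
    rw [hω k h1 h2]
    exact Real.rpow_pos_of_pos (hγpos k h1 h2) _
  have hγle : ∀ k, 1 ≤ k → k ≤ N →
      γ 1 * ((k : ℝ) ^ (1 / 2 : ℝ))⁻¹ ≤ (g 1 / M)⁻¹ * γ k := by
    intro k h1 h2
    have hk : (0 : ℝ) < k := by exact_mod_cast h1
    have hGk := hGpos k h1 h2
    have hden : G k * (k : ℝ) ^ (a / 2) ≤ M * (k : ℝ) ^ (1 / 2 : ℝ) := by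
      calc G k * (k : ℝ) ^ (a / 2)
          ≤ M * (k : ℝ) ^ ((1 - a) / 2) * (k : ℝ) ^ (a / 2) := by
            gcongr
            exact hGle k h1 h2
        _ = M * (k : ℝ) ^ (1 / 2 : ℝ) := by
            rw [mul_assoc, ← Real.rpow_add hk]
            congr 2
            ring
    calc γ 1 * ((k : ℝ) ^ (1 / 2 : ℝ))⁻¹
        = (g 1 / M)⁻¹ * (Real.sqrt (2 * σ * R) / (M * (k : ℝ) ^ (1 / 2 : ℝ))) := by
          rw [hγ 1 le_rfl hN, hG1, Nat.cast_one, Real.one_rpow]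
          field_simp
      _ ≤ (g 1 / M)⁻¹ * γ k := by
          rw [hγ k h1 h2]
          gcongr
  have hterm : ∀ k, 1 ≤ k → k ≤ N →
      ω 1 * (k : ℝ) ^ (m / 2) ≤ (g 1 / M) ^ m * ω k := by
    intro k h1 h2
    have hk : (0 : ℝ) < k := by exact_mod_cast h1
    have hγ1 := hγpos 1 le_rfl hN
    have hγk := hγpos k h1 h2
    have hpow := Real.rpow_le_rpow (by positivity) (hγle k h1 h2) (neg_nonneg.mpr hm0)
    rw [Real.mul_rpow hγ1.le (by positivity), Real.mul_rpow (by positivity) hγk.le,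
      ← Real.rpow_neg_eq_inv_rpow, ← Real.rpow_neg_eq_inv_rpow, neg_neg,
      ← Real.rpow_mul hk.le, ← hω 1 le_rfl hN, ← hω k h1 h2] at hpow
    rwa [show m / 2 = 1 / 2 * m by ring]
  have hne : (Finset.Icc 1 N).Nonempty := Finset.nonempty_Icc.mpr hN
  have hsumω : 0 < ∑ k ∈ Finset.Icc 1 N, ω k := Finset.sum_pos
    (fun k hk => hωpos k (Finset.mem_Icc.mp hk).1 (Finset.mem_Icc.mp hk).2) hne
  have hsumk : 0 < ∑ k ∈ Finset.Icc 1 N, (k : ℝ) ^ (m / 2) := Finset.sum_pos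
    (fun k hk => Real.rpow_pos_of_pos (by exact_mod_cast (Finset.mem_Icc.mp hk).1) _) hne
  have hsum : ω 1 * ∑ k ∈ Finset.Icc 1 N, (k : ℝ) ^ (m / 2) ≤
      (g 1 / M) ^ m * ∑ k ∈ Finset.Icc 1 N, ω k := by
    rw [Finset.mul_sum, Finset.mul_sum]
    exact Finset.sum_le_sum fun k hk =>
      hterm k (Finset.mem_Icc.mp hk).1 (Finset.mem_Icc.mp hk).2
  rw [div_le_div_iff₀ hsumω hsumk, mul_right_comm, mul_right_comm _ H]
  exact mul_le_mul_of_nonneg_right hsum hH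
end
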